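/- arXiv:1806.07107 — 2 statements merged into one kernel-verified Lean document; each statement's English description precedes it below -/
import Mathlib

section
/- The Laurent polynomial f_L = 1 + X + Y over the field F₂ (the finitely supported function ℤ² → F₂ taking value 1 exactly at (0,0), (1,0) and (0,1)) has no line polynomial factors: there is no factorization f_L = g·h in the Laurent polynomial ring over F₂ in which g is a line polynomial. -/
/-- Laurent polynomials over `R` in two variables: finitely supported functions
`ℤ² → R`, multiplied by convolution. -/
abbrev LP (R : Type*) [CommRing R] := AddMonoidAlgebra R (ℤ × ℤ)

/-- `f` annihilates the configuration `c` if the formal product of `f` with the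
power series of `c` is the zero power series. -/
def Annihilates {R : Type*} [CommRing R] (f : LP R) (c : ℤ × ℤ → R) : Prop :=
  ∀ n : ℤ × ℤ, ∑ m ∈ f.coeff.support, f.coeff m * c (n - m) = 0

/-- The set of `D`-patterns of `c`. -/
def Patterns {R : Type*} (c : ℤ × ℤ → R) (D : Finset (ℤ × ℤ)) : Set (D → R) :=
  Set.range fun t : ℤ × ℤ => fun d : D => c (t + d.1)

/-- `c` has low complexity with respect to some finite nonempty shape. -/
def LowComplexity {R : Type*} (c : ℤ × ℤ → R) : Prop :=
  ∃ D : Finset (ℤ × ℤ), D.Nonempty ∧ (Patterns c D).ncard ≤ D.card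

/-- `t` is a period vector of `c`. -/
def IsPeriodVector {R : Type*} (c : ℤ × ℤ → R) (t : ℤ × ℤ) : Prop :=
  t ≠ 0 ∧ ∀ n : ℤ × ℤ, c (n + t) = c n

/-- `c` is periodic. -/
def Periodic {R : Type*} (c : ℤ × ℤ → R) : Prop :=
  ∃ t : ℤ × ℤ, IsPeriodVector c t

/-- `c` is two-periodic: it has two linearly independent period vectors. -/
def TwoPeriodic {R : Type*} (c : ℤ × ℤ → R) : Prop :=
  ∃ t₁ t₂ : ℤ × ℤ, IsPeriodVector c t₁ ∧ IsPeriodVector c t₂ ∧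
    t₁.1 * t₂.2 - t₁.2 * t₂.1 ≠ 0

/-- `f` is a line polynomial in direction `u`: its support has at least two elements
and lies on a line `{n + r • u : r ∈ ℚ}`. -/
def IsLinePoly {R : Type*} [CommRing R] (u : ℤ × ℤ) (f : LP R) : Prop :=
  1 < f.coeff.support.card ∧ ∃ n : ℤ × ℤ, ∀ m ∈ f.coeff.support, ∃ r : ℚ,
    (m.1 : ℚ) = n.1 + r * u.1 ∧ (m.2 : ℚ) = n.2 + r * u.2

/-- A finite set `D ⊆ ℤ²` has an outer edge perpendicular to `v`. -/
def HasOuterEdge (D : Finset (ℤ × ℤ)) (v : ℤ × ℤ) : Prop :=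
  ∃ x ∈ D, (∀ y ∈ D, 0 ≤ (y.1 - x.1) * v.1 + (y.2 - x.2) * v.2) ∧
    ∃ y₁ ∈ D, ∃ y₂ ∈ D, y₁ ≠ y₂ ∧
      (y₁.1 - x.1) * v.1 + (y₁.2 - x.2) * v.2 = 0 ∧
      (y₂.1 - x.1) * v.1 + (y₂.2 - x.2) * v.2 = 0

/-!
Over a ring without zero divisors, a line polynomial factor of direction `u` forces a nonzero
product to have outer edges on both of its sides parallel to `u`. Indeed, for `v` orthogonal to
`u`, multiplication by the line polynomial shifts the levels of `m ↦ m ⬝ v` by a constant. In `ℤ²`,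
the sumset of a set with at least two points and a nonempty set contains at least two points that
are sums in a unique way, so nothing cancels there: every level that meets the support of the
product meets it at least twice, in particular the lowest and the highest one. The support of
`a + b X + c Y` is a triangle, which has no two parallel edges.
-/

open AddMonoidAlgebra

section Levels

variable {A B F R : Type*}

theorem exists_uniqueAdd_add_ne [Add A] [TwoUniqueSums A] {s t : Finset A} (hs : 1 < s.card)
    (ht : t.Nonempty) (p : A) : ∃ a ∈ s, ∃ b ∈ t, UniqueAdd s t a b ∧ a + b ≠ p := by
  have hcard : 1 < s.card * t.card := hs.trans_le (Nat.le_mul_of_pos_right _ ht.card_pos)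
  obtain ⟨x, hx, y, hy, hxy, hx_unique, hy_unique⟩ := TwoUniqueSums.uniqueAdd_of_one_lt_card hcard
  rw [Finset.mem_product] at hx hy
  by_cases hxp : x.1 + x.2 = p
  · refine ⟨y.1, hy.1, y.2, hy.2, hy_unique, fun hyp ↦ hxy ?_⟩
    exact Prod.ext_iff.2 (hy_unique hx.1 hx.2 (hxp.trans hyp.symm))
  · exact ⟨x.1, hx.1, x.2, hx.2, hx_unique, hxp⟩

theorem exists_ne_mem_support_mul_of_level [Add A] [TwoUniqueSums A] [Add B] [FunLike F A B]
    [AddHomClass F A B] [Semiring R] [NoZeroDivisors R] {g h : AddMonoidAlgebra R A} {L : F} {c : B}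
    (hcard : 1 < g.coeff.support.card) (hc : ∀ m ∈ g.coeff.support, L m = c) {p : A}
    (hp : p ∈ (g * h).coeff.support) : ∃ q ∈ (g * h).coeff.support, q ≠ p ∧ L q = L p := by
  classical
  let t : Finset A := {b ∈ h.coeff.support | c + L b = L p}
  have ht : t.Nonempty := by
    obtain ⟨a, ha, b, hb, rfl⟩ := Finset.mem_add.1 (support_coeff_mul_subset g h hp)
    exact ⟨b, Finset.mem_filter.2 ⟨hb, by rw [map_add, hc a ha]⟩⟩
  obtain ⟨a, ha, b, hb, hunique, hne⟩ := exists_uniqueAdd_add_ne hcard ht p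
  obtain ⟨hb, hbp⟩ := Finset.mem_filter.1 hb
  have hlevel : L (a + b) = L p := by rw [map_add, hc a ha, hbp]
  have hunique' : UniqueAdd g.coeff.support h.coeff.support a b := fun a' b' ha' hb' hab ↦
    hunique ha' (Finset.mem_filter.2 ⟨hb', by rw [← hc a' ha', ← map_add, hab, hlevel]⟩) hab
  refine ⟨a + b, ?_, hne, hlevel⟩
  rw [Finsupp.mem_support_iff, coeff_mul_add_of_uniqueAdd hunique']
  exact mul_ne_zero (Finsupp.mem_support_iff.1 ha) (Finsupp.mem_support_iff.1 hb)

end Levels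

/-- The pairing `m ↦ m ⬝ v` with a fixed vector `v`, the functional that is minimized on an outer
edge perpendicular to `v`. -/
def dotHom (v : ℤ × ℤ) : ℤ × ℤ →+ ℤ :=
  (AddMonoidHom.mulRight v.1).coprod (AddMonoidHom.mulRight v.2)

theorem dotHom_apply (v m : ℤ × ℤ) : dotHom v m = m.1 * v.1 + m.2 * v.2 := rfl

theorem hasOuterEdge_iff {D : Finset (ℤ × ℤ)} {v : ℤ × ℤ} :
    HasOuterEdge D v ↔ ∃ x ∈ D, ∃ y ∈ D, x ≠ y ∧ dotHom v x = dotHom v y ∧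
      ∀ z ∈ D, dotHom v x ≤ dotHom v z := by
  simp only [dotHom_apply]
  constructor
  · rintro ⟨x, -, hmin, y₁, hy₁, y₂, hy₂, hne, h₁, h₂⟩
    exact ⟨y₁, hy₁, y₂, hy₂, hne, by linarith, fun z hz ↦ by linarith [hmin z hz]⟩
  · rintro ⟨x, hx, y, hy, hne, hxy, hmin⟩
    exact ⟨x, hx, fun z hz ↦ by linarith [hmin z hz], x, hx, y, hy, hne, by ring, by linarith⟩

theorem hasOuterEdge_of_forall_exists_ne {D : Finset (ℤ × ℤ)} {v : ℤ × ℤ} (hD : D.Nonempty)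
    (hlevel : ∀ x ∈ D, ∃ y ∈ D, y ≠ x ∧ dotHom v y = dotHom v x) : HasOuterEdge D v := by
  obtain ⟨x, hx, hmin⟩ := D.exists_min_image (dotHom v) hD
  obtain ⟨y, hy, hne, hyx⟩ := hlevel x hx
  exact hasOuterEdge_iff.2 ⟨x, hx, y, hy, hne.symm, hyx.symm, hmin⟩

theorem hasOuterEdge_triangle_iff {v : ℤ × ℤ} :
    HasOuterEdge {(0, 0), (1, 0), (0, 1)} v ↔
      v.1 = 0 ∧ 0 ≤ v.2 ∨ v.2 = 0 ∧ 0 ≤ v.1 ∨ v.1 = v.2 ∧ v.1 ≤ 0 := by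
  simp only [hasOuterEdge_iff, dotHom_apply, Finset.mem_insert, Finset.mem_singleton,
    forall_eq_or_imp, forall_eq, exists_eq_or_imp, exists_eq_left, ne_eq, Prod.mk.injEq]
  lia

theorem eq_zero_of_hasOuterEdge_triangle {v : ℤ × ℤ}
    (hpos : HasOuterEdge {(0, 0), (1, 0), (0, 1)} v)
    (hneg : HasOuterEdge {(0, 0), (1, 0), (0, 1)} (-v)) : v = 0 := by
  rw [hasOuterEdge_triangle_iff] at hpos hneg
  rw [Prod.fst_neg, Prod.snd_neg] at hneg
  exact Prod.ext (by rw [Prod.fst_zero]; omega) (by rw [Prod.snd_zero]; omega)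

namespace IsLinePoly

variable {R : Type*} [CommRing R] {u v : ℤ × ℤ} {g h : LP R}

theorem direction_ne_zero (hg : IsLinePoly u g) : u ≠ 0 := by
  rintro rfl
  obtain ⟨hcard, n, hn⟩ := hg
  refine hcard.not_ge (Finset.card_le_one_iff_subset_singleton.2 ⟨n, fun m hm ↦ ?_⟩)
  simpa [Prod.ext_iff] using hn m hm

theorem exists_dotHom_eq (hg : IsLinePoly u g) (huv : dotHom v u = 0) :
    ∃ c, ∀ m ∈ g.coeff.support, dotHom v m = c := by
  obtain ⟨-, n, hn⟩ := hg
  refine ⟨dotHom v n, fun m hm ↦ ?_⟩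
  obtain ⟨r, h₁, h₂⟩ := hn m hm
  rw [dotHom_apply] at huv ⊢
  have huv' : (u.1 * v.1 + u.2 * v.2 : ℚ) = 0 := mod_cast huv
  have hmn : (m.1 * v.1 + m.2 * v.2 : ℚ) = n.1 * v.1 + n.2 * v.2 := by
    rw [h₁, h₂]
    linear_combination r * huv'
  exact_mod_cast hmn

theorem hasOuterEdge_support_mul [NoZeroDivisors R] (hg : IsLinePoly u g) (huv : dotHom v u = 0)
    (hgh : g * h ≠ 0) : HasOuterEdge (g * h).coeff.support v := by
  obtain ⟨c, hc⟩ := hg.exists_dotHom_eq huv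
  refine hasOuterEdge_of_forall_exists_ne (by simpa using hgh) fun p hp ↦ ?_
  exact exists_ne_mem_support_mul_of_level hg.1 hc hp

end IsLinePoly

theorem support_coeff_single_add_single_add_single {M R : Type*} [DecidableEq M] [Semiring R]
    {x y z : M} (hxy : x ≠ y) (hxz : x ≠ z) (hyz : y ≠ z) {a b c : R} (ha : a ≠ 0) (hb : b ≠ 0)
    (hc : c ≠ 0) : (single x a + single y b + single z c).coeff.support = {x, y, z} := by
  rw [coeff_add, coeff_add, Finsupp.support_add_eq, Finsupp.support_add_eq] <;>
    simp [Finsupp.support_single, *]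

theorem ledrappier_no_line_poly_factor_general {R : Type*} [CommRing R] [NoZeroDivisors R]
    {a b c : R} (ha : a ≠ 0) (hb : b ≠ 0) (hc : c ≠ 0) :
    ¬ ∃ (g h : LP R) (u : ℤ × ℤ), IsLinePoly u g ∧
      single ((0 : ℤ), (0 : ℤ)) a + single (1, 0) b + single (0, 1) c = g * h := by
  rintro ⟨g, h, u, hg, hgh⟩
  have hsupport : (g * h).coeff.support = {(0, 0), (1, 0), (0, 1)} := by
    rw [← hgh]
    exact support_coeff_single_add_single_add_single (by decide) (by decide) (by decide) ha hb hc
  have hne : g * h ≠ 0 := fun hzero ↦ by simp [hzero, eq_comm (a := ∅)] at hsupport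
  let v : ℤ × ℤ := (-u.2, u.1)
  have hpos := hg.hasOuterEdge_support_mul (v := v) (by rw [dotHom_apply]; ring) hne
  have hneg := hg.hasOuterEdge_support_mul (v := -v)
    (by rw [dotHom_apply, Prod.fst_neg, Prod.snd_neg]; ring) hne
  rw [hsupport] at hpos hneg
  have hv : v = 0 := eq_zero_of_hasOuterEdge_triangle hpos hneg
  exact hg.direction_ne_zero (by simpa [v, Prod.ext_iff, and_comm] using hv)

/-- f_L = 1 + X + Y over F₂ has no line polynomial factors. -/
theorem ledrappier_no_line_poly_factor :
    ¬ ∃ (g h : LP (ZMod 2)) (u : ℤ × ℤ), u ≠ 0 ∧ IsLinePoly u g ∧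
      (AddMonoidAlgebra.single ((0:ℤ),(0:ℤ)) 1 + AddMonoidAlgebra.single ((1:ℤ),(0:ℤ)) 1 +
        AddMonoidAlgebra.single ((0:ℤ),(1:ℤ)) 1 : LP (ZMod 2)) = g * h :=
  fun ⟨g, h, u, _, hg, hgh⟩ ↦
    ledrappier_no_line_poly_factor_general one_ne_zero one_ne_zero one_ne_zero ⟨g, h, u, hg, hgh⟩
end

section
/- Let p be a prime, let f be a nonzero Laurent polynomial over F_p in two variables all of whose line polynomial factors are in the same direction u ∈ ℤ²∖{0}, and let c : ℤ² → F_p be annihilated by f. Let c' : ℤ² → ℤ be obtained from c by the renaming a ↦ a for a ∈ {0,…,p−1}. If some nonzero Laurent polynomial over ℤ annihilates c', then c is periodic in direction u: some nonzero integer multiple of u is a period vector of c. -/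
/-! Write `F` for the given annihilator over `ℤ` and `c'` for the integer configuration. For a
prime `q` the Frobenius identity `F ^ q = F(X ^ q)` modulo `q` shows that `F(X ^ q) c'` is divisible
by `q`; its values are bounded independently of `q`, so for large `q` they vanish. Iterating,
`F(X ^ (1 + i r))` annihilates `c'` for a suitable `r ≠ 0` and all `i`, and eliminating all terms of
`F` but one by a Vandermonde argument leaves an annihilator `∏ (X ^ (r v) - 1)` with nonzero `v`.

Reduction to the finite field turns this product into an annihilator of `c`, so every prime ideal
`P` containing the annihilator ideal of `c` contains `f` and some `X ^ t - 1`. Such a `P` contains a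
nonzero polynomial in `X ^ u`: this is clear if `t` is parallel to `u`. Otherwise `P` contains a
prime factor `q` of `X ^ t - 1`, which is a line polynomial not in direction `u` and hence does not
divide `f`; so `P` is strictly larger than `(q)`, and the quotient by `(q)` is integral over the
Laurent polynomials in `X ^ u`. Consequently a nonzero polynomial in `X ^ u` annihilates `c`, and
over a finite field it divides some `X ^ (k u) - 1` with `k ≠ 0`. -/

open AddMonoidAlgebra

section ConvolutionAction

variable {R S G : Type*} [CommRing R] [CommRing S] [AddCommGroup G]

/-- The translation action of `G` on configurations `G → R`, where `s` moves the value at `n`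
to `n + s`. -/
def translation (R G : Type*) [CommRing R] [AddCommGroup G] :
    Multiplicative G →* Module.End R (G → R) where
  toFun s := LinearMap.funLeft R R (· - s.toAdd)
  map_one' := by ext; simp
  map_mul' a b := by
    refine LinearMap.ext fun c => funext fun n => ?_
    simp [sub_sub]

/-- The action of the group algebra on configurations by convolution, which linearly extends the
translation action. -/
noncomputable def convAction (R G : Type*) [CommRing R] [AddCommGroup G] :
    R[G] →ₐ[R] Module.End R (G → R) :=
  AddMonoidAlgebra.lift R (Module.End R (G → R)) G (translation R G)

theorem convAction_single_apply (m : G) (a : R) (c : G → R) (n : G) :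
    convAction R G (single m a) c n = a * c (n - m) := by
  simp [convAction, translation]

theorem convAction_apply (f : R[G]) (c : G → R) (n : G) :
    convAction R G f c n = ∑ m ∈ f.coeff.support, f.coeff m * c (n - m) := by
  simp [convAction, AddMonoidAlgebra.lift_apply, Finsupp.sum, translation]

theorem convAction_mapRingHom_apply (φ : R →+* S) (f : R[G]) (c : G → R) (n : G) :
    convAction S G (mapRingHom G φ f) (φ ∘ c) n = φ (convAction R G f c n) := by
  induction f using AddMonoidAlgebra.induction_linear with
  | zero => simp
  | add f g hf hg => simp only [map_add, LinearMap.add_apply, Pi.add_apply, hf, hg]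
  | single m a => simp [convAction_single_apply]

/-- The ideal of all elements of the group algebra that annihilate the configuration `c`. -/
noncomputable def annihilatorIdeal (c : G → R) : Ideal R[G] where
  carrier := {f | convAction R G f c = 0}
  add_mem' {f g} hf hg := by
    rw [Set.mem_ofPred_eq] at hf hg ⊢
    rw [map_add, LinearMap.add_apply, hf, hg, add_zero]
  zero_mem' := by simp
  smul_mem' f g hg := by
    rw [Set.mem_ofPred_eq] at hg ⊢
    rw [smul_eq_mul, map_mul, Module.End.mul_apply, hg, map_zero]

theorem mem_annihilatorIdeal {c : G → R} {f : R[G]} :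
    f ∈ annihilatorIdeal c ↔ ∀ n, convAction R G f c n = 0 :=
  funext_iff

theorem annihilates_iff_mem_annihilatorIdeal {f : LP R} {c : ℤ × ℤ → R} :
    Annihilates f c ↔ f ∈ annihilatorIdeal c := by
  simp only [Annihilates, mem_annihilatorIdeal, convAction_apply]

theorem mapRingHom_mem_annihilatorIdeal (φ : R →+* S) {f : R[G]} {c : G → R}
    (hf : f ∈ annihilatorIdeal c) : mapRingHom G φ f ∈ annihilatorIdeal (φ ∘ c) := by
  rw [mem_annihilatorIdeal] at hf ⊢
  intro n
  rw [convAction_mapRingHom_apply, hf, map_zero]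

theorem mem_annihilatorIdeal_of_single_mul [NoZeroDivisors R] {c : G → R} {m : G} {a : R}
    (ha : a ≠ 0) {f : R[G]} (hf : single m a * f ∈ annihilatorIdeal c) :
    f ∈ annihilatorIdeal c := by
  rw [mem_annihilatorIdeal] at hf ⊢
  intro n
  have h := hf (n + m)
  rw [map_mul, Module.End.mul_apply, convAction_single_apply, add_sub_cancel_right] at h
  exact (mul_eq_zero.1 h).resolve_left ha

end ConvolutionAction

section Dilation

variable {R S G : Type*} [CommRing R] [CommRing S]

/-- The endomorphism `f(X) ↦ f(X ^ k)` of the group algebra. -/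
noncomputable def dilate (R G : Type*) [CommRing R] [AddCommMonoid G] (k : ℕ) : R[G] →+* R[G] :=
  mapDomainRingHom R (nsmulAddMonoidHom (α := G) k)

section Monoid

variable [AddCommMonoid G]

theorem dilate_single (k : ℕ) (m : G) (a : R) :
    dilate R G k (single m a) = single (k • m) a := by
  simp [dilate]

theorem dilate_one_apply (f : R[G]) : dilate R G 1 f = f := by
  induction f using AddMonoidAlgebra.induction_linear with
  | zero => simp
  | add f g hf hg => simp only [map_add, hf, hg]
  | single m a => simp only [dilate_single, one_smul]

theorem dilate_mul_apply (k l : ℕ) (f : R[G]) :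
    dilate R G (k * l) f = dilate R G k (dilate R G l f) := by
  induction f using AddMonoidAlgebra.induction_linear with
  | zero => simp
  | add f g hf hg => simp only [map_add, hf, hg]
  | single m a => simp only [dilate_single, mul_smul]

theorem mapRingHom_dilate (φ : R →+* S) (k : ℕ) (f : R[G]) :
    mapRingHom G φ (dilate R G k f) = dilate S G k (mapRingHom G φ f) := by
  induction f using AddMonoidAlgebra.induction_linear with
  | zero => simp
  | add f g hf hg => simp only [map_add, hf, hg]
  | single m a => simp [dilate_single]

theorem dilate_eq_sum (k : ℕ) (f : R[G]) :
    dilate R G k f = ∑ m ∈ f.coeff.support, single (k • m) (f.coeff m) := by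
  conv_lhs => rw [← AddMonoidAlgebra.sum_coeff_single f]
  simp only [Finsupp.sum, map_sum, dilate_single]

theorem dilate_zmod_eq_pow (q : ℕ) [Fact q.Prime] (f : (ZMod q)[G]) :
    dilate (ZMod q) G q f = f ^ q := by
  have : CharP (ZMod q)[G] q :=
    charP_of_injective_algebraMap (algebraMap (ZMod q) (ZMod q)[G]).injective q
  induction f using AddMonoidAlgebra.induction_linear with
  | zero => simp [(Fact.out : q.Prime).ne_zero]
  | add f g hf hg => rw [map_add, hf, hg, add_pow_char]
  | single m a => simp [dilate_single, AddMonoidAlgebra.single_pow]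

end Monoid

variable [AddCommGroup G]

theorem convAction_dilate_apply (k : ℕ) (f : R[G]) (c : G → R) (n : G) :
    convAction R G (dilate R G k f) c n =
      ∑ m ∈ f.coeff.support, f.coeff m * c (n - k • m) := by
  rw [dilate_eq_sum]
  simp only [map_sum, LinearMap.sum_apply, Finset.sum_apply, convAction_single_apply]

theorem abs_convAction_dilate_le (k : ℕ) (F : ℤ[G]) {c : G → ℤ} {C : ℤ}
    (hC : ∀ n, |c n| ≤ C) (n : G) :
    |convAction ℤ G (dilate ℤ G k F) c n| ≤ (∑ m ∈ F.coeff.support, |F.coeff m|) * C := by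
  rw [convAction_dilate_apply, Finset.sum_mul]
  refine (Finset.abs_sum_le_sum_abs _ _).trans (Finset.sum_le_sum fun m _ => ?_)
  rw [abs_mul]
  exact mul_le_mul_of_nonneg_left (hC _) (abs_nonneg _)

theorem natCast_dvd_convAction_dilate {q : ℕ} (hq : q.Prime) {F : ℤ[G]} {c : G → ℤ}
    (hF : F ∈ annihilatorIdeal c) (n : G) :
    (q : ℤ) ∣ convAction ℤ G (dilate ℤ G q F) c n := by
  have : Fact q.Prime := ⟨hq⟩
  let φ := Int.castRingHom (ZMod q)
  have hpow : mapRingHom G φ (dilate ℤ G q F) ∈ annihilatorIdeal (φ ∘ c) := by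
    rw [mapRingHom_dilate, dilate_zmod_eq_pow]
    exact Ideal.pow_mem_of_mem _ (mapRingHom_mem_annihilatorIdeal φ hF) q hq.pos
  rw [← ZMod.intCast_zmod_eq_zero_iff_dvd]
  exact (convAction_mapRingHom_apply φ _ c n).symm.trans (mem_annihilatorIdeal.1 hpow n)

theorem dilate_mem_annihilatorIdeal {F : ℤ[G]} {c : G → ℤ} {C : ℤ} (hC : ∀ n, |c n| ≤ C)
    (hF : F ∈ annihilatorIdeal c) {k : ℕ} (hk : k ≠ 0)
    (hlt : ∀ q : ℕ, q.Prime → q ∣ k → (∑ m ∈ F.coeff.support, |F.coeff m|) * C < q) :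
    dilate ℤ G k F ∈ annihilatorIdeal c := by
  induction k using induction_on_primes with
  | zero => exact absurd rfl hk
  | one => rwa [dilate_one_apply]
  | prime_mul q a hq ih =>
    have ha : dilate ℤ G a F ∈ annihilatorIdeal c :=
      ih (right_ne_zero_of_mul hk) fun q' hq' hdvd => hlt q' hq' (hdvd.mul_left q)
    refine mem_annihilatorIdeal.2 fun n => Int.eq_zero_of_abs_lt_dvd (m := q) ?_
      ((abs_convAction_dilate_le (q * a) F hC n).trans_lt (hlt q hq (dvd_mul_right q a)))
    rw [dilate_mul_apply]
    exact natCast_dvd_convAction_dilate hq ha n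

theorem exists_forall_dilate_mem_annihilatorIdeal {F : ℤ[G]} {c : G → ℤ} {C : ℤ}
    (hC : ∀ n, |c n| ≤ C) (hF : F ∈ annihilatorIdeal c) :
    ∃ r : ℕ, r ≠ 0 ∧ ∀ i : ℕ, dilate ℤ G (1 + i * r) F ∈ annihilatorIdeal c := by
  set M : ℕ := ((∑ m ∈ F.coeff.support, |F.coeff m|) * C).toNat
  refine ⟨M.factorial, M.factorial_ne_zero, fun i =>
    dilate_mem_annihilatorIdeal hC hF (by omega) fun q hq hdvd => ?_⟩
  by_contra hle
  have hqM : q ∣ i * M.factorial := ((Nat.Prime.dvd_factorial hq).2 (by omega)).mul_left i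
  exact hq.not_dvd_one ((Nat.dvd_add_left hqM).1 hdvd)

end Dilation

section ProductOfBinomials

theorem sum_mul_eval_mem_of_forall_sum_mul_pow_mem {A ι : Type*} [CommRing A] {I : Ideal A}
    {s : Finset ι} {a w : ι → A} (h : ∀ n : ℕ, ∑ j ∈ s, a j * w j ^ n ∈ I) (Q : Polynomial A) :
    ∑ j ∈ s, a j * Q.eval (w j) ∈ I := by
  have hQ : ∑ j ∈ s, a j * Q.eval (w j) =
      ∑ n ∈ Finset.range (Q.natDegree + 1), Q.coeff n * ∑ j ∈ s, a j * w j ^ n := by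
    simp only [Polynomial.eval_eq_sum_range, Finset.mul_sum, mul_left_comm]
    exact Finset.sum_comm
  rw [hQ]
  exact I.sum_mem fun n _ => I.mul_mem_left _ (h n)

theorem mul_prod_sub_mem_of_forall_sum_mul_pow_mem {A ι : Type*} [CommRing A] [DecidableEq ι]
    {I : Ideal A} {s : Finset ι} {a w : ι → A} (h : ∀ n : ℕ, ∑ j ∈ s, a j * w j ^ n ∈ I)
    {i : ι} (hi : i ∈ s) : a i * ∏ j ∈ s.erase i, (w j - w i) ∈ I := by
  -- Evaluating `∏ (w j - X)` over `j ≠ i` kills every term of the sum except the `i`-th.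
  have hQ := sum_mul_eval_mem_of_forall_sum_mul_pow_mem h
    (∏ j ∈ s.erase i, (Polynomial.C (w j) - Polynomial.X))
  simp only [Polynomial.eval_prod, Polynomial.eval_sub, Polynomial.eval_C,
    Polynomial.eval_X] at hQ
  rwa [Finset.sum_eq_single_of_mem i hi fun j hj hji => ?_] at hQ
  rw [Finset.prod_eq_zero (Finset.mem_erase.2 ⟨hji, hj⟩) (sub_self _), mul_zero]

variable {G : Type*} [AddCommGroup G]

theorem exists_prod_single_sub_one_mem_of_coeff_zero_ne_zero {F : ℤ[G]} (hF0 : F.coeff 0 ≠ 0)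
    {c : G → ℤ} {C : ℤ} (hC : ∀ n, |c n| ≤ C) (hF : F ∈ annihilatorIdeal c) :
    ∃ (r : ℕ) (s : Finset G), r ≠ 0 ∧ 0 ∉ s ∧
      ∏ v ∈ s, (single (r • v) 1 - 1) ∈ annihilatorIdeal c := by
  classical
  obtain ⟨r, hr, hdil⟩ := exists_forall_dilate_mem_annihilatorIdeal hC hF
  have hpow (i : ℕ) : ∑ m ∈ F.coeff.support, single m (F.coeff m) * single (r • m) 1 ^ i ∈
      annihilatorIdeal c := by
    convert hdil i using 1
    simp [dilate_eq_sum, single_pow, single_mul_single, add_smul, mul_smul]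
  have hprod := mul_prod_sub_mem_of_forall_sum_mul_pow_mem hpow (Finsupp.mem_support_iff.2 hF0)
  rw [smul_zero, ← one_def] at hprod
  exact ⟨r, F.coeff.support.erase 0, hr, Finset.notMem_erase 0 _,
    mem_annihilatorIdeal_of_single_mul hF0 hprod⟩

theorem exists_prod_single_sub_one_mem_annihilatorIdeal {F : ℤ[G]} (hF0 : F ≠ 0) {c : G → ℤ}
    {C : ℤ} (hC : ∀ n, |c n| ≤ C) (hF : F ∈ annihilatorIdeal c) :
    ∃ (r : ℕ) (s : Finset G), r ≠ 0 ∧ 0 ∉ s ∧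
      ∏ v ∈ s, (single (r • v) 1 - 1) ∈ annihilatorIdeal c := by
  obtain ⟨v, hv⟩ : ∃ v, F.coeff v ≠ 0 := by
    by_contra! h
    exact hF0 (coeff_inj.1 (Finsupp.ext h))
  refine exists_prod_single_sub_one_mem_of_coeff_zero_ne_zero (F := single (-v) 1 * F) ?_ hC
    (Ideal.mul_mem_left _ _ hF)
  simpa using hv

end ProductOfBinomials

section PeriodSubgroup

variable {R G H : Type*} [CommRing R] [AddCommGroup G] [AddCommGroup H]

/-- The subgroup of all `t` such that `X ^ t = 1` modulo the ideal `I`. For the annihilator ideal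
of a configuration it consists of `0` and the period vectors. -/
def periodSubgroup (I : Ideal R[G]) : AddSubgroup G where
  carrier := {t | single t 1 - 1 ∈ I}
  zero_mem' := by simp [one_def]
  add_mem' {a b} ha hb := by
    have h : (single (a + b) 1 - 1 : R[G]) =
        single a 1 * (single b 1 - 1) + (single a 1 - 1) := by
      simp [mul_sub, single_mul_single]
    rw [Set.mem_ofPred_eq, h]
    exact I.add_mem (I.mul_mem_left _ hb) ha
  neg_mem' {a} ha := by
    have h : (single (-a) 1 - 1 : R[G]) = -(single (-a) 1 * (single a 1 - 1)) := by
      simp [mul_sub, single_mul_single, one_def]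
    rw [Set.mem_ofPred_eq, h]
    exact I.neg_mem (I.mul_mem_left _ ha)

theorem mem_periodSubgroup {I : Ideal R[G]} {t : G} :
    t ∈ periodSubgroup I ↔ single t 1 - 1 ∈ I := Iff.rfl

theorem mk_single_one_eq_iff {I : Ideal R[G]} {a b : G} :
    Ideal.Quotient.mk I (single a 1) = Ideal.Quotient.mk I (single b 1) ↔
      a - b ∈ periodSubgroup I := by
  have h : (single a 1 - single b 1 : R[G]) = single b 1 * (single (a - b) 1 - 1) := by
    simp [mul_sub, single_mul_single]
  have hunit : IsUnit (single b 1 : R[G]) :=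
    .of_mul_eq_one (single (-b) 1) (by simp [single_mul_single, one_def])
  rw [Ideal.Quotient.mk_eq_mk_iff_sub_mem, h, Ideal.unit_mul_mem_iff_mem _ hunit,
    mem_periodSubgroup]

theorem mem_periodSubgroup_annihilatorIdeal {c : G → R} {t : G} :
    t ∈ periodSubgroup (annihilatorIdeal c) ↔ ∀ n, c (n + t) = c n := by
  rw [mem_periodSubgroup, mem_annihilatorIdeal, ← (Equiv.addRight t).forall_congr_right]
  simp [convAction_single_apply, sub_eq_zero, eq_comm]

theorem single_one_sub_one_ne_zero [Nontrivial R] {t : G} (ht : t ≠ 0) :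
    (single t 1 - 1 : R[G]) ≠ 0 := by
  rwa [sub_ne_zero, one_def, Ne, single_left_inj one_ne_zero]

theorem ne_bot_of_mem_periodSubgroup [Nontrivial R] {I : Ideal R[G]} {t : G} (ht : t ≠ 0)
    (htI : t ∈ periodSubgroup I) : I ≠ ⊥ :=
  Submodule.ne_bot_iff _ |>.2 ⟨_, htI, single_one_sub_one_ne_zero ht⟩

theorem mem_periodSubgroup_comap_mapDomainRingHom {I : Ideal R[G]} {ι : H →+ G} {k : H} :
    k ∈ periodSubgroup (I.comap (mapDomainRingHom R ι)) ↔ ι k ∈ periodSubgroup I := by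
  rw [mem_periodSubgroup, mem_periodSubgroup, Ideal.mem_comap, map_sub, map_one,
    mapDomainRingHom_apply, mapDomain_single]

theorem isIntegral_mk_comp_mapDomainRingHom {I : Ideal R[G]} {ι : H →+ G}
    (h : ∀ m : G, ∃ N : ℕ, 0 < N ∧ ∃ a : H, N • m - ι a ∈ periodSubgroup I) :
    ((Ideal.Quotient.mk I).comp (mapDomainRingHom R ι)).IsIntegral := by
  set ψ := (Ideal.Quotient.mk I).comp (mapDomainRingHom R ι)
  have hmonomial (m : G) : ψ.IsIntegralElem (Ideal.Quotient.mk I (single m 1)) := by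
    let := ψ.toAlgebra
    obtain ⟨N, hN, a, ha⟩ := h m
    refine IsIntegral.of_pow hN ?_
    have hpow : Ideal.Quotient.mk I (single m 1) ^ N = ψ (single a 1) := by
      rw [← map_pow, single_pow, one_pow, mk_single_one_eq_iff.2 ha]
      simp [ψ]
    exact hpow ▸ ψ.isIntegralElem_map
  intro x
  obtain ⟨g, rfl⟩ := Ideal.Quotient.mk_surjective x
  induction g using AddMonoidAlgebra.induction_linear with
  | zero => simpa using ψ.isIntegralElem_zero
  | add f g hf hg => simpa using hf.add ψ hg
  | single m a =>
    have hsplit : Ideal.Quotient.mk I (single m a) =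
        ψ (single 0 a) * Ideal.Quotient.mk I (single m 1) := by
      simp [ψ, ← map_mul, single_mul_single]
    exact hsplit ▸ ψ.isIntegralElem_map.mul ψ (hmonomial m)

theorem exists_ne_zero_mem_periodSubgroup {K : Type*} [Field K] [Finite K]
    {J : Ideal (LaurentPolynomial K)} (hJ : J ≠ ⊥) : ∃ k : ℤ, k ≠ 0 ∧ k ∈ periodSubgroup J := by
  obtain ⟨b, hbJ, hb⟩ := Submodule.exists_mem_ne_zero_of_ne_bot hJ
  obtain ⟨n, g, hg⟩ := b.exists_T_pow
  have hgJ : Polynomial.toLaurent g ∈ J := hg ▸ J.mul_mem_right _ hbJ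
  have hg0 : g ≠ 0 := by
    rw [← Polynomial.toLaurent_ne_zero, hg]
    exact (LaurentPolynomial.isUnit_T _).mul_left_eq_zero.not.2 hb
  have : Module.Finite K (AdjoinRoot g) := (AdjoinRoot.powerBasis hg0).finite
  have : Finite (AdjoinRoot g) := Module.finite_of_finite K
  obtain ⟨i, j, hij, hroot⟩ :=
    Finite.exists_ne_map_eq_of_infinite fun i : ℕ => AdjoinRoot.root g ^ i
  have hdvd : g ∣ Polynomial.X ^ i - Polynomial.X ^ j := by
    rw [← AdjoinRoot.mk_eq_zero]
    simp [hroot]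
  refine ⟨i - j, by omega, mk_single_one_eq_iff.1 (Ideal.Quotient.mk_eq_mk_iff_sub_mem _ _ |>.2 ?_)⟩
  have hmem := J.mem_of_dvd (map_dvd Polynomial.toLaurent hdvd) hgJ
  rwa [map_sub, Polynomial.toLaurent_X_pow, Polynomial.toLaurent_X_pow] at hmem

end PeriodSubgroup

section SupportOfProduct

variable {R G Γ : Type*} [Semiring R] [NoZeroDivisors R] [AddGroup G] [UniqueSums G]
  [AddCommGroup Γ] [LinearOrder Γ] [IsOrderedAddMonoid Γ]

theorem exists_max_add_max_mem_support_mul (w : G →+ Γ) {f g : R[G]} (hf : f ≠ 0) (hg : g ≠ 0) :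
    ∃ a ∈ f.coeff.support, ∃ b ∈ g.coeff.support, (∀ m ∈ f.coeff.support, w m ≤ w a) ∧
      (∀ m ∈ g.coeff.support, w m ≤ w b) ∧ a + b ∈ (f * g).coeff.support := by
  classical
  obtain ⟨a₀, ha₀, ha₀max⟩ := f.coeff.support.exists_max_image w (by simpa using hf)
  obtain ⟨b₀, hb₀, hb₀max⟩ := g.coeff.support.exists_max_image w (by simpa using hg)
  obtain ⟨a, ha, b, hb, hab⟩ := UniqueSums.uniqueAdd_of_nonempty
    (A := {x ∈ f.coeff.support | w x = w a₀}) (B := {y ∈ g.coeff.support | w y = w b₀})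
    ⟨a₀, by simpa using ha₀⟩ ⟨b₀, by simpa using hb₀⟩
  rw [Finset.mem_filter] at ha hb
  have hunique : UniqueAdd f.coeff.support g.coeff.support a b := by
    intro x y hx hy hxy
    have hw : w x = w a₀ ∧ w y = w b₀ := by
      rw [← add_eq_add_iff_eq_and_eq (ha₀max x hx) (hb₀max y hy), ← ha.2, ← hb.2, ← map_add,
        ← map_add, hxy]
    exact hab (Finset.mem_filter.2 ⟨hx, hw.1⟩) (Finset.mem_filter.2 ⟨hy, hw.2⟩) hxy
  refine ⟨a, ha.1, b, hb.1, fun m hm => (ha₀max m hm).trans_eq ha.2.symm,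
    fun m hm => (hb₀max m hm).trans_eq hb.2.symm, ?_⟩
  rw [Finsupp.mem_support_iff, coeff_mul_add_of_uniqueAdd hunique]
  exact mul_ne_zero (Finsupp.mem_support_iff.1 ha.1) (Finsupp.mem_support_iff.1 hb.1)

theorem map_eq_of_mem_support_of_mul (w : G →+ Γ) {f g : R[G]} {κ : Γ} (hf : f ≠ 0) (hg : g ≠ 0)
    (h : ∀ m ∈ (f * g).coeff.support, w m = κ) {m n : G} (hm : m ∈ f.coeff.support)
    (hn : n ∈ f.coeff.support) : w m = w n := by
  obtain ⟨a, -, b, -, hamax, hbmax, hab⟩ := exists_max_add_max_mem_support_mul w hf hg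
  obtain ⟨a', -, b', hb', hamin, -, hab'⟩ := exists_max_add_max_mem_support_mul (-w) hf hg
  simp only [AddMonoidHom.neg_apply, neg_le_neg_iff] at hamin
  have hsum : w a' + w b' = w a + w b := by
    rw [← map_add, ← map_add, h _ hab, h _ hab']
  have haa' : w a ≤ w a' :=
    le_of_add_le_add_right (hsum.symm.le.trans (add_le_add_right (hbmax b' hb') (w a')))
  exact (((hamax m hm).trans haa').trans (hamin n hn)).antisymm
    (((hamax n hn).trans haa').trans (hamin m hm))

end SupportOfProduct

section LinePolynomials

/-- The cross product `m ↦ m × u` of integer vectors in the plane; its fibers are the lines in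
direction `u`. -/
def planeCross (u : ℤ × ℤ) : ℤ × ℤ →+ ℤ where
  toFun m := m.1 * u.2 - m.2 * u.1
  map_zero' := by simp
  map_add' a b := by simp only [Prod.fst_add, Prod.snd_add]; ring

theorem planeCross_apply (u m : ℤ × ℤ) : planeCross u m = m.1 * u.2 - m.2 * u.1 := rfl

theorem fst_sq_add_snd_sq_ne_zero {u : ℤ × ℤ} (hu : u ≠ 0) : u.1 ^ 2 + u.2 ^ 2 ≠ 0 := by
  contrapose! hu
  have h1 : u.1 = 0 := by nlinarith [sq_nonneg u.1, sq_nonneg u.2]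
  have h2 : u.2 = 0 := by nlinarith [sq_nonneg u.1, sq_nonneg u.2]
  exact Prod.ext h1 h2

theorem planeCross_smul_eq (t u m : ℤ × ℤ) :
    planeCross u t • m = planeCross u m • t - planeCross t m • u := by
  ext <;> simp only [planeCross_apply, Prod.smul_fst, Prod.smul_snd, Prod.fst_sub, Prod.snd_sub,
    smul_eq_mul] <;> ring

theorem exists_smul_eq_smul_of_planeCross_eq_zero {t u : ℤ × ℤ} (ht : t ≠ 0)
    (h : planeCross u t = 0) : ∃ l k : ℤ, l ≠ 0 ∧ l • u = k • t := by
  rw [planeCross_apply] at h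
  refine ⟨t.1 ^ 2 + t.2 ^ 2, t.1 * u.1 + t.2 * u.2, fst_sq_add_snd_sq_ne_zero ht, ?_⟩
  ext <;> simp only [Prod.smul_fst, Prod.smul_snd, smul_eq_mul]
  · linear_combination -t.2 * h
  · linear_combination t.1 * h

theorem planeCross_eq_planeCross_iff_exists_rat {u : ℤ × ℤ} (hu : u ≠ 0) {m n : ℤ × ℤ} :
    planeCross u m = planeCross u n ↔
      ∃ r : ℚ, (m.1 : ℚ) = n.1 + r * u.1 ∧ (m.2 : ℚ) = n.2 + r * u.2 := by
  rw [planeCross_apply, planeCross_apply]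
  constructor
  · intro h
    have hu' : (u.1 : ℚ) ^ 2 + (u.2 : ℚ) ^ 2 ≠ 0 := mod_cast fst_sq_add_snd_sq_ne_zero hu
    have h' : (m.1 * u.2 - m.2 * u.1 : ℚ) = n.1 * u.2 - n.2 * u.1 := mod_cast h
    -- The orthogonal projection of `m - n` onto the line spanned by `u`.
    refine ⟨((m.1 - n.1) * u.1 + (m.2 - n.2) * u.2) / (u.1 ^ 2 + u.2 ^ 2), ?_, ?_⟩ <;> field_simp
    · linear_combination u.2 * h'
    · linear_combination -u.1 * h'
  · rintro ⟨r, h1, h2⟩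
    have h : (m.1 * u.2 - m.2 * u.1 : ℚ) = n.1 * u.2 - n.2 * u.1 := by
      linear_combination u.2 * h1 - u.1 * h2
    exact mod_cast h

variable {R : Type*} [CommRing R]

theorem isLinePoly_iff_planeCross_eq {u : ℤ × ℤ} (hu : u ≠ 0) {f : LP R} :
    IsLinePoly u f ↔ 1 < f.coeff.support.card ∧
      ∀ m ∈ f.coeff.support, ∀ n ∈ f.coeff.support, planeCross u m = planeCross u n := by
  simp only [IsLinePoly, ← planeCross_eq_planeCross_iff_exists_rat hu]
  refine and_congr_right fun hcard => ⟨?_, fun h => ?_⟩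
  · rintro ⟨x, hx⟩ m hm n hn
    rw [hx m hm, hx n hn]
  · obtain ⟨n, hn⟩ := Finset.card_pos.1 (Nat.zero_lt_of_lt hcard)
    exact ⟨n, fun m hm => h m hm n hn⟩

theorem planeCross_eq_zero_of_isLinePoly_of_isLinePoly {t u : ℤ × ℤ} (ht : t ≠ 0) (hu : u ≠ 0)
    {f : LP R} (hft : IsLinePoly t f) (hfu : IsLinePoly u f) : planeCross u t = 0 := by
  obtain ⟨hcard, ht'⟩ := (isLinePoly_iff_planeCross_eq ht).1 hft
  obtain ⟨-, hu'⟩ := (isLinePoly_iff_planeCross_eq hu).1 hfu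
  obtain ⟨x, hx, y, hy, hxy⟩ := Finset.one_lt_card.1 hcard
  have h := planeCross_smul_eq t u (x - y)
  rw [map_sub, map_sub, ht' x hx y hy, hu' x hx y hy, sub_self, sub_self, zero_smul, zero_smul,
    sub_zero, smul_eq_zero] at h
  exact h.resolve_right (sub_ne_zero.2 hxy)

theorem one_lt_card_support_of_ne_zero_of_not_isUnit {F G : Type*} [Field F] [AddCommGroup G]
    {f : F[G]} (hf : f ≠ 0) (hunit : ¬IsUnit f) : 1 < f.coeff.support.card := by
  have hpos : 0 < f.coeff.support.card := Finset.card_pos.2 (by simpa using hf)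
  refine lt_of_le_of_ne hpos fun hcard => hunit ?_
  obtain ⟨m, a, ha, hfm⟩ := Finsupp.card_support_eq_one'.1 hcard.symm
  obtain rfl : f = single m a := coeff_inj.1 hfm
  exact .of_mul_eq_one (single (-m) a⁻¹) (by simp [single_mul_single, ha, one_def])

theorem isLinePoly_of_dvd_single_sub_one {F : Type*} [Field F] {t : ℤ × ℤ} (ht : t ≠ 0) {q : LP F}
    (hq : q ∣ single t 1 - 1) (hunit : ¬IsUnit q) : IsLinePoly t q := by
  obtain ⟨r, hr⟩ := hq
  have hne : q * r ≠ 0 := hr ▸ single_one_sub_one_ne_zero ht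
  have hcross : ∀ m ∈ (q * r).coeff.support, planeCross t m = 0 := by
    classical
    intro m hm
    rw [← hr, coeff_sub, one_def, coeff_single, coeff_single] at hm
    rcases Finset.mem_union.1 (Finsupp.support_sub hm) with h | h <;>
      obtain rfl := Finset.mem_singleton.1 (Finsupp.support_single_subset h)
    · simp [planeCross_apply, mul_comm]
    · exact map_zero _
  exact (isLinePoly_iff_planeCross_eq ht).2
    ⟨one_lt_card_support_of_ne_zero_of_not_isUnit (left_ne_zero_of_mul hne) hunit,
      fun m hm n hn => map_eq_of_mem_support_of_mul (planeCross t) (left_ne_zero_of_mul hne)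
        (right_ne_zero_of_mul hne) hcross hm hn⟩

end LinePolynomials

section Elimination

theorem comap_ne_bot_of_forall_isPrime {A B : Type*} [CommRing A] [IsDomain A] [CommRing B]
    (φ : A →+* B) {I : Ideal B} (h : ∀ P : Ideal B, P.IsPrime → I ≤ P → P.comap φ ≠ ⊥) :
    I.comap φ ≠ ⊥ := by
  intro hI
  have hdisj : Disjoint (I : Set B) ((nonZeroDivisors A).map φ) := by
    rw [Set.disjoint_left]
    rintro _ hx ⟨a, ha, rfl⟩
    have : a ∈ I.comap φ := hx
    rw [hI, Ideal.mem_bot] at this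
    exact nonZeroDivisors.ne_zero ha this
  obtain ⟨P, hP, hIP, hPdisj⟩ := Ideal.exists_le_prime_disjoint I _ hdisj
  refine h P hP hIP ((Submodule.eq_bot_iff _).2 fun a ha => ?_)
  by_contra ha0
  exact Set.disjoint_left.1 hPdisj ha ⟨a, mem_nonZeroDivisors_of_ne_zero ha0, rfl⟩

theorem comap_ne_bot_of_lt_of_isIntegral {A B : Type*} [CommRing A] [CommRing B] {φ : A →+* B}
    {Q P : Ideal B} [Q.IsPrime] (hQP : Q < P) (hφ : ((Ideal.Quotient.mk Q).comp φ).IsIntegral) :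
    P.comap φ ≠ ⊥ := by
  obtain ⟨x, hxP, hxQ⟩ := SetLike.exists_of_lt hQP
  obtain ⟨g, hg, hroot⟩ := hφ (Ideal.Quotient.mk Q x)
  rw [← Polynomial.hom_eval₂, Ideal.Quotient.eq_zero_iff_mem] at hroot
  exact (bot_le.trans_lt (Ideal.comap_lt_comap_of_root_mem_sdiff hQP.le ⟨hxP, hxQ⟩
    (hg.map _).ne_zero hroot)).ne'

theorem exists_prime_mem_dvd {B : Type*} [CommRing B] [UniqueFactorizationMonoid B]
    {P : Ideal B} [hP : P.IsPrime] {b : B} (hb : b ≠ 0) (hbP : b ∈ P) :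
    ∃ q ∈ P, Prime q ∧ q ∣ b := by
  obtain ⟨s, hs, hsb⟩ := UniqueFactorizationMonoid.exists_prime_factors b hb
  have hprod : s.prod ∈ P := P.mem_of_dvd hsb.symm.dvd hbP
  obtain ⟨q, hqs, hqP⟩ := (hP.multiset_prod_mem_iff_exists_mem s).1 hprod
  exact ⟨q, hqP, hs q hqs, (Multiset.dvd_prod hqs).trans hsb.dvd⟩

theorem uniqueFactorizationMonoid_laurentPolynomial (R : Type*) [CommRing R]
    [UniqueFactorizationMonoid R] : UniqueFactorizationMonoid (LaurentPolynomial R) :=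
  .of_isLocalization (Submonoid.powers (Polynomial.X : Polynomial R)) _

theorem uniqueFactorizationMonoid_lp (R : Type*) [CommRing R]
    [UniqueFactorizationMonoid R] : UniqueFactorizationMonoid (LP R) :=
  have := uniqueFactorizationMonoid_laurentPolynomial R
  (curryRingEquiv (R := R) (M := ℤ) (N := ℤ)).symm.toMulEquiv.uniqueFactorizationMonoid
    (uniqueFactorizationMonoid_laurentPolynomial (LaurentPolynomial R))

/-- The substitution `T ↦ X ^ u`, whose image consists of the Laurent polynomials supported on
the multiples of `u`. -/
noncomputable def monomialSubst (R : Type*) [CommRing R] (u : ℤ × ℤ) :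
    LaurentPolynomial R →+* LP R :=
  mapDomainRingHom R (zmultiplesHom (ℤ × ℤ) u)

theorem mem_periodSubgroup_comap_monomialSubst {R : Type*} [CommRing R] {u : ℤ × ℤ}
    {I : Ideal (LP R)} {k : ℤ} :
    k ∈ periodSubgroup (I.comap (monomialSubst R u)) ↔ k • u ∈ periodSubgroup I :=
  mem_periodSubgroup_comap_mapDomainRingHom

theorem isIntegral_mk_comp_monomialSubst {R : Type*} [CommRing R] {t u : ℤ × ℤ}
    (htu : planeCross u t ≠ 0) {I : Ideal (LP R)} (ht : t ∈ periodSubgroup I) :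
    ((Ideal.Quotient.mk I).comp (monomialSubst R u)).IsIntegral := by
  set d := planeCross u t
  -- Cramer's rule multiplied by `d`, since the exponent `d * d` must be positive.
  refine isIntegral_mk_comp_mapDomainRingHom fun m => ⟨d.natAbs * d.natAbs,
    Nat.mul_pos (Int.natAbs_pos.2 htu) (Int.natAbs_pos.2 htu), -(d * planeCross t m), ?_⟩
  have hm : (d.natAbs * d.natAbs) • m - zmultiplesHom (ℤ × ℤ) u (-(d * planeCross t m)) =
      (d * planeCross u m) • t := by
    rw [← natCast_zsmul, Int.natAbs_mul_self, mul_smul, planeCross_smul_eq t u m,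
      zmultiplesHom_apply]
    module
  exact hm ▸ zsmul_mem ht _

variable {F : Type*} [Field F] {u : ℤ × ℤ} {f : LP F}

theorem comap_monomialSubst_ne_bot_of_isPrime (hu : u ≠ 0)
    (hline : ∀ g : LP F, g ∣ f → (∃ v : ℤ × ℤ, v ≠ 0 ∧ IsLinePoly v g) → IsLinePoly u g)
    {P : Ideal (LP F)} [P.IsPrime] (hf : f ∈ P) {t : ℤ × ℤ} (ht : t ≠ 0)
    (htP : t ∈ periodSubgroup P) : P.comap (monomialSubst F u) ≠ ⊥ := by
  by_cases htu : planeCross u t = 0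
  · obtain ⟨l, k, hl, hlk⟩ := exists_smul_eq_smul_of_planeCross_eq_zero ht htu
    refine ne_bot_of_mem_periodSubgroup hl (mem_periodSubgroup_comap_monomialSubst.2 ?_)
    exact hlk ▸ zsmul_mem htP k
  · have := uniqueFactorizationMonoid_lp F
    obtain ⟨q, hqP, hq, hqt⟩ := exists_prime_mem_dvd (single_one_sub_one_ne_zero ht) htP
    have hqf : ¬q ∣ f := fun h => by
      have hqline := isLinePoly_of_dvd_single_sub_one ht hqt hq.not_isUnit
      exact htu (planeCross_eq_zero_of_isLinePoly_of_isLinePoly ht hu hqline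
        (hline q h ⟨t, ht, hqline⟩))
    have : (Ideal.span {q}).IsPrime := (Ideal.span_singleton_prime hq.ne_zero).2 hq
    have hlt : Ideal.span {q} < P := SetLike.lt_iff_le_and_exists.2
      ⟨P.span_singleton_le_iff_mem.2 hqP, f, hf, mt Ideal.mem_span_singleton.1 hqf⟩
    exact comap_ne_bot_of_lt_of_isIntegral hlt
      (isIntegral_mk_comp_monomialSubst htu (Ideal.mem_span_singleton.2 hqt))

theorem comap_monomialSubst_ne_bot (hu : u ≠ 0)
    (hline : ∀ g : LP F, g ∣ f → (∃ v : ℤ × ℤ, v ≠ 0 ∧ IsLinePoly v g) → IsLinePoly u g)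
    {I : Ideal (LP F)} (hf : f ∈ I) {r : ℕ} (hr : r ≠ 0) {s : Finset (ℤ × ℤ)} (hs : 0 ∉ s)
    (hprod : ∏ v ∈ s, (single (r • v) 1 - 1) ∈ I) : I.comap (monomialSubst F u) ≠ ⊥ := by
  refine comap_ne_bot_of_forall_isPrime _ fun P hP hIP => ?_
  obtain ⟨v, hvs, hvP⟩ := hP.prod_mem_iff.1 (hIP hprod)
  exact comap_monomialSubst_ne_bot_of_isPrime hu hline (hIP hf)
    (smul_ne_zero hr (ne_of_mem_of_not_mem hvs hs)) hvP

end Elimination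

theorem line_factors_one_direction_periodic_general {K : Type*} [Field K] [Finite K] (f : LP K)
    (u : ℤ × ℤ) (hu : u ≠ 0)
    (hline : ∀ g : LP K, g ∣ f → (∃ v : ℤ × ℤ, v ≠ 0 ∧ IsLinePoly v g) → IsLinePoly u g)
    (c : ℤ × ℤ → K) (hc : Annihilates f c) (c' : ℤ × ℤ → ℤ) (hcc' : ∀ n, (c' n : K) = c n)
    (C : ℤ) (hC : ∀ n, |c' n| ≤ C) (h : ∃ f' : LP ℤ, f' ≠ 0 ∧ Annihilates f' c') :
    ∃ k : ℤ, k ≠ 0 ∧ IsPeriodVector c (k • u) := by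
  obtain ⟨f', hf'0, hf'⟩ := h
  rw [annihilates_iff_mem_annihilatorIdeal] at hc hf'
  obtain ⟨r, s, hr, hs, hprod⟩ := exists_prod_single_sub_one_mem_annihilatorIdeal hf'0 hC hf'
  have hprodK : ∏ v ∈ s, (single (r • v) 1 - 1) ∈ annihilatorIdeal c := by
    have hmap := mapRingHom_mem_annihilatorIdeal (Int.castRingHom K) hprod
    rw [show Int.castRingHom K ∘ c' = c from funext hcc'] at hmap
    simpa [map_prod] using hmap
  obtain ⟨k, hk, hkJ⟩ :=
    exists_ne_zero_mem_periodSubgroup (comap_monomialSubst_ne_bot hu hline hc hr hs hprodK)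
  rw [mem_periodSubgroup_comap_monomialSubst, mem_periodSubgroup_annihilatorIdeal] at hkJ
  exact ⟨k, hk, smul_ne_zero hk hu, hkJ⟩

/-- if all line polynomial factors of f are in direction u and c ∈ X_f has a
nonzero annihilator over ℤ, then c is periodic in direction u. -/
theorem line_factors_one_direction_periodic (p : ℕ) [Fact p.Prime] (f : LP (ZMod p))
    (hf : f ≠ 0) (u : ℤ × ℤ) (hu : u ≠ 0)
    (hline : ∀ g : LP (ZMod p), g ∣ f → (∃ v : ℤ × ℤ, v ≠ 0 ∧ IsLinePoly v g) →
      IsLinePoly u g)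
    (c : ℤ × ℤ → ZMod p) (hc : Annihilates f c)
    (h : ∃ f' : LP ℤ, f' ≠ 0 ∧ Annihilates f' (fun n => ((c n).val : ℤ))) :
    ∃ k : ℤ, k ≠ 0 ∧ IsPeriodVector c (k • u) :=
  line_factors_one_direction_periodic_general f u hu hline c hc
    (fun n => ((c n).val : ℤ)) (by simp) p
    (fun n => by rw [Nat.abs_cast]; exact_mod_cast (ZMod.val_lt (c n)).le) h
end
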